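/- There exists a dense Gδ subset R of P([0,1]^d) (with the weak topology) such that for every measure μ ∈ R, the set E_μ(0) = { x ∈ [0,1]^d : h_μ(x) = 0 } is uncountable and dim_H E_μ(0) = 0. -/

import Mathlib

open MeasureTheory Metric Filter Set
open scoped ENNReal NNReal Topology

noncomputable section

/-- The unit cube `[0,1]^d` of `ℝ^d` equipped with the supremum metric,
viewed as a (compact) metric space. -/
abbrev Cube (d : ℕ) : Type := ↥(Set.Icc (0 : Fin d → ℝ) 1)

/-- The local (lower) dimension `h_μ(x) = liminf_{r → 0⁺} log μ(B(x,r)) / log r`. -/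
noncomputable def locDim {d : ℕ} (μ : Measure (Cube d)) (x : Cube d) : EReal :=
  Filter.liminf
    (fun r : ℝ => ENNReal.log (μ (Metric.ball x r)) / (Real.log r : EReal))
    (nhdsWithin 0 (Set.Ioi 0))

/-- The level set `E_μ(h) = {x : h_μ(x) = h}`. -/
def levelSet {d : ℕ} (μ : Measure (Cube d)) (h : ℝ) : Set (Cube d) :=
  {x | locDim μ x = (h : EReal)}

/-- The dyadic cube `I_{j,k} = ∏ᵢ [kᵢ 2^{-j}, (kᵢ+1) 2^{-j})`, as a subset of the cube. -/
def dyadicCube (d j : ℕ) (k : Fin d → Fin (2 ^ j)) : Set (Cube d) :=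
  {x | ∀ i, (k i : ℝ) / 2 ^ j ≤ (x : Fin d → ℝ) i ∧ (x : Fin d → ℝ) i < ((k i : ℝ) + 1) / 2 ^ j}

/-- `s_j(q) = Σ_{Q ∈ G_j, μ(Q) ≠ 0} μ(Q)^q`. -/
def dyadicSum {d : ℕ} (μ : Measure (Cube d)) (q : ℝ) (j : ℕ) : ℝ :=
  ∑ k ∈ Finset.univ.filter (fun k : Fin d → Fin (2 ^ j) => μ (dyadicCube d j k) ≠ 0),
    (μ (dyadicCube d j k)).toReal ^ q

/-- The `L^q`-spectrum `τ_μ(q) = liminf_j -(1/j) log₂ s_j(q)`. -/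
def lqSpectrum {d : ℕ} (μ : Measure (Cube d)) (q : ℝ) : EReal :=
  Filter.liminf
    (fun j : ℕ => ((-(1 / (j : ℝ)) * Real.logb 2 (dyadicSum μ q j) : ℝ) : EReal))
    Filter.atTop

/-!
Finitely supported measures are dense, and around each of their atoms all small balls have mass
bounded below. By the portmanteau theorem, having almost all mass in finitely many small balls that
are heavy compared with any prescribed power of their radius is an open condition, so a typical
measure has local dimension `0` almost everywhere. Having no atom is a dense `Gδ` condition too, as
each atom can be spread over a Cantor set close to it. Hence for a typical `μ` the set `E_μ(0)` has
full measure while countable sets are null. Its Hausdorff dimension is `0` for every `μ`: by the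
Vitali covering theorem, the points `x` with `r ^ s < μ (B(x, r))` for arbitrarily small `r` are
covered by arbitrarily small balls whose `s`-dimensional sizes sum to `O(μ(X))`.
-/

section LowerLocalDim

variable {X : Type*} [PseudoMetricSpace X] [MeasurableSpace X]

/-- The lower local dimension `liminf_{r → 0⁺} log μ(B(x,r)) / log r` of a measure on an arbitrary
(pseudo)metric space, extending `locDim` from the cube. -/
def lowerLocalDim (μ : Measure X) (x : X) : EReal :=
  liminf (fun r : ℝ => ENNReal.log (μ (ball x r)) / (Real.log r : EReal)) (𝓝[>] 0)

theorem log_div_log_lt_iff {m : ℝ≥0∞} {r s : ℝ} (hr : r ∈ Ioo 0 1) :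
    ENNReal.log m / (Real.log r : EReal) < s ↔ ENNReal.ofReal r ^ s < m := by
  have hlog : (0 : EReal) < -(Real.log r : EReal) := by
    exact_mod_cast neg_pos.2 (Real.log_neg hr.1 hr.2)
  have hneg : ENNReal.log m / (Real.log r : EReal) = -ENNReal.log m / -(Real.log r : EReal) := by
    rw [div_eq_mul_inv, div_eq_mul_inv, EReal.inv_neg, neg_mul_neg]
  rw [hneg, EReal.div_lt_iff hlog (by exact_mod_cast EReal.coe_ne_top _), mul_neg,
    EReal.neg_lt_neg_iff, ← ENNReal.log_ofReal_of_pos hr.1, ← ENNReal.log_rpow,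
    ENNReal.log_lt_log_iff]

theorem eventually_log_div_log_lt_iff (μ : Measure X) (x : X) (s : ℝ) :
    ∀ᶠ r : ℝ in 𝓝[>] 0, ENNReal.log (μ (ball x r)) / (Real.log r : EReal) < s ↔
      ENNReal.ofReal r ^ s < μ (ball x r) := by
  filter_upwards [Ioo_mem_nhdsGT one_pos] with r hr using log_div_log_lt_iff hr

theorem lowerLocalDim_le_iff {μ : Measure X} {x : X} {s : EReal} :
    lowerLocalDim μ x ≤ s ↔
      ∀ t : ℝ, s < t → ∃ᶠ r in 𝓝[>] (0 : ℝ), ENNReal.ofReal r ^ t < μ (ball x r) := by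
  rw [lowerLocalDim, liminf_le_iff]
  refine ⟨fun h t hst => ?_, fun h y hsy => ?_⟩
  · exact (frequently_congr (eventually_log_div_log_lt_iff μ x t)).1 (h t hst)
  · obtain ⟨t, hst, hty⟩ := EReal.lt_iff_exists_real_btwn.1 hsy
    exact ((frequently_congr (eventually_log_div_log_lt_iff μ x t)).2 (h t hst)).mono
      fun r hr => hr.trans hty

theorem lowerLocalDim_nonneg (μ : Measure X) [IsZeroOrProbabilityMeasure μ] (x : X) :
    0 ≤ lowerLocalDim μ x := by
  refine le_liminf_of_le (by isBoundedDefault) ?_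
  filter_upwards [eventually_log_div_log_lt_iff μ x 0] with r hr
  rw [← not_lt, ← EReal.coe_zero, hr, ENNReal.rpow_zero, not_lt]
  exact prob_le_one

end LowerLocalDim

section HausdorffDimension

theorem ediam_closedBall_le {X : Type*} [PseudoMetricSpace X] (x : X) (r : ℝ) :
    ediam (closedBall x r) ≤ 2 * ENNReal.ofReal r := by
  refine (ediam_mono fun y hy => ?_).trans (ediam_closedEBall_le (x := x))
  rw [mem_closedEBall, edist_dist]
  exact ENNReal.ofReal_le_ofReal hy

theorem tsum_ediam_closedBall_rpow_le {X ι : Type*} [PseudoMetricSpace X] (x : ι → X) (r : ι → ℝ)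
    {c s : ℝ} (hc : 0 ≤ c) (hs : 0 ≤ s) :
    ∑' i, ediam (closedBall (x i) (c * r i)) ^ s ≤
      (2 * ENNReal.ofReal c) ^ s * ∑' i, ENNReal.ofReal (r i) ^ s := by
  rw [← ENNReal.tsum_mul_left]
  refine ENNReal.tsum_le_tsum fun i => ?_
  rw [← ENNReal.mul_rpow_of_nonneg _ _ hs, mul_assoc, ← ENNReal.ofReal_mul hc]
  exact ENNReal.rpow_le_rpow (ediam_closedBall_le _ _) hs

theorem exists_countable_cover_closedBall_tsum_le {X : Type*} [PseudoMetricSpace X]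
    [MeasurableSpace X] [OpensMeasurableSpace X] (μ : Measure X) [SFinite μ] (g : ℝ → ℝ≥0∞)
    (δ : ℝ) :
    ∃ u : Set (X × ℝ), u.Countable ∧ (∀ p ∈ u, p.2 ∈ Ioo 0 δ) ∧
      {x | ∃ r ∈ Ioo 0 δ, g r < μ (ball x r)} ⊆ ⋃ p ∈ u, closedBall p.1 (4 * p.2) ∧
      ∑' p : u, g p.1.2 ≤ μ univ := by
  obtain ⟨u, hu, hdisj, hcov⟩ := Vitali.exists_disjoint_subfamily_covering_enlargement_closedBall
    {p : X × ℝ | p.2 ∈ Ioo 0 δ ∧ g p.2 < μ (closedBall p.1 p.2)} Prod.fst Prod.snd δ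
    (fun p hp => hp.1.2.le) 4 (by norm_num)
  have hdisj' : Pairwise (Function.onFun Disjoint fun p : u => closedBall p.1.1 p.1.2) :=
    hdisj.subtype
  have hmeas (p : u) : MeasurableSet (closedBall p.1.1 p.1.2) := isClosed_closedBall.measurableSet
  refine ⟨u, ?_, fun p hp => (hu hp).1, ?_, ?_⟩
  · have hpos : {p : u | 0 < μ (closedBall p.1.1 p.1.2)} = univ :=
      eq_univ_of_forall fun p => bot_le.trans_lt (hu p.2).2
    have hcount := Measure.countable_meas_pos_of_disjoint_iUnion (μ := μ) hmeas hdisj'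
    rwa [hpos, countable_univ_iff] at hcount
  · rintro x ⟨r, hr, hgr⟩
    obtain ⟨p, hp, hsub⟩ := hcov (x, r)
      ⟨hr, hgr.trans_le (measure_mono ball_subset_closedBall)⟩
    exact mem_biUnion hp (hsub (mem_closedBall_self hr.1.le))
  · calc ∑' p : u, g p.1.2 ≤ ∑' p : u, μ (closedBall p.1.1 p.1.2) :=
          ENNReal.tsum_le_tsum fun p => (hu p.2).2.le
      _ ≤ μ (⋃ p : u, closedBall p.1.1 p.1.2) :=
          tsum_meas_le_meas_iUnion_of_disjoint μ hmeas hdisj'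
      _ ≤ μ univ := measure_mono (subset_univ _)

variable {X : Type*} [MetricSpace X] [MeasurableSpace X] [BorelSpace X]

theorem hausdorffMeasure_setOf_frequently_lt_measure_ball_le (μ : Measure X) [SFinite μ] {s : ℝ}
    (hs : 0 ≤ s) :
    μH[s] {x | ∃ᶠ r in 𝓝[>] (0 : ℝ), ENNReal.ofReal r ^ s < μ (ball x r)} ≤ 8 ^ s * μ univ := by
  choose u hcount hu hcov hsum using
    exists_countable_cover_closedBall_tsum_le μ fun r => ENNReal.ofReal r ^ s
  have hc (δ : ℝ) : Countable (u δ) := (hcount δ).to_subtype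
  have hsize (δ : ℝ) :
      ∑' p : u δ, ediam (closedBall p.1.1 (4 * p.1.2)) ^ s ≤ 8 ^ s * μ univ := by
    refine (tsum_ediam_closedBall_rpow_le _ _ (by norm_num) hs).trans ?_
    rw [ENNReal.ofReal_ofNat, show (2 * 4 : ℝ≥0∞) = 8 by norm_num]
    gcongr
    exact hsum δ
  have hdiam (δ : ℝ) (p : u δ) :
      ediam (closedBall p.1.1 (4 * p.1.2)) ≤ 2 * ENNReal.ofReal (4 * δ) := by
    refine (ediam_closedBall_le _ _).trans ?_
    gcongr
    exact (hu δ p.1 p.2).2.le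
  have hscale : Tendsto (fun δ : ℝ => 2 * ENNReal.ofReal (4 * δ)) (𝓝[>] 0) (𝓝 0) := by
    have h : Continuous fun δ : ℝ => 2 * ENNReal.ofReal (4 * δ) :=
      (ENNReal.continuous_const_mul ENNReal.ofNat_ne_top).comp
        (ENNReal.continuous_ofReal.comp (continuous_const_mul 4))
    simpa using (h.tendsto 0).mono_left nhdsWithin_le_nhds
  calc _ ≤ liminf (fun δ => ∑' p : u δ, ediam (closedBall p.1.1 (4 * p.1.2)) ^ s) (𝓝[>] 0) := by
        refine Measure.hausdorffMeasure_le_liminf_tsum _ _ _ hscale _ (.of_forall hdiam) ?_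
        filter_upwards [self_mem_nhdsWithin] with δ hδ x hx
        rw [← biUnion_eq_iUnion (u δ) fun p _ => closedBall p.1 (4 * p.2)]
        obtain ⟨r, hr, hrδ⟩ := (hx.and_eventually (Ioo_mem_nhdsGT hδ)).exists
        exact hcov δ ⟨r, hrδ, hr⟩
    _ ≤ liminf (fun _ => 8 ^ s * μ univ) (𝓝[>] (0 : ℝ)) := liminf_le_liminf (.of_forall hsize)
    _ = 8 ^ s * μ univ := liminf_const _

theorem dimH_setOf_lowerLocalDim_le (μ : Measure X) [IsFiniteMeasure μ] (s : ℝ≥0∞) :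
    dimH {x | lowerLocalDim μ x ≤ s} ≤ s := by
  refine le_of_forall_gt_imp_ge_of_dense fun t' hst' => ?_
  obtain ⟨t, hst, htt'⟩ := ENNReal.lt_iff_exists_nnreal_btwn.1 hst'
  refine (dimH_le_of_hausdorffMeasure_ne_top (ne_top_of_le_ne_top
    (b := 8 ^ (t : ℝ) * μ univ) ?_ ((measure_mono fun x hx => ?_).trans
      (hausdorffMeasure_setOf_frequently_lt_measure_ball_le μ t.2)))).trans htt'.le
  · exact ENNReal.mul_ne_top (ENNReal.rpow_ne_top_of_nonneg t.2 (by norm_num)) (measure_ne_top μ _)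
  · exact lowerLocalDim_le_iff.1 hx t (EReal.coe_ennreal_lt_coe_ennreal_iff.2 hst)

end HausdorffDimension

section WeakTopology

variable {X : Type*} [TopologicalSpace X] [MeasurableSpace X] [OpensMeasurableSpace X]

theorem mem_closure_of_tendsto_of_measurePreserving {Ω : Type*} [MeasurableSpace Ω]
    {P : ProbabilityMeasure Ω} {μ : ProbabilityMeasure X} {S : Set (ProbabilityMeasure X)}
    {Y : ℕ → Ω → X} {Z : Ω → X} (hY : ∀ n, Measurable (Y n))
    (hZ : MeasurePreserving Z (P : Measure Ω) (μ : Measure X))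
    (hlim : ∀ ω, Tendsto (fun n => Y n ω) atTop (𝓝 (Z ω)))
    (hS : ∀ n, P.map (hY n).aemeasurable ∈ S) : μ ∈ closure S := by
  have h := (tendstoInDistribution_of_ae_tendsto (μ' := (P : Measure Ω))
    (fun n => (hY n).aemeasurable) hZ.aemeasurable (.of_forall hlim)).tendsto
  have hμ : (⟨(P : Measure Ω).map Z, Measure.isProbabilityMeasure_map hZ.aemeasurable⟩ :
      ProbabilityMeasure X) = μ := Subtype.ext hZ.map_eq
  rw [hμ] at h
  exact mem_closure_of_tendsto h (.of_forall hS)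

variable [HasOuterApproxClosed X]

theorem isOpen_setOf_lt_measure_of_isOpen {G : Set X} (hG : IsOpen G) (c : ℝ≥0∞) :
    IsOpen {μ : ProbabilityMeasure X | c < (μ : Measure X) G} := by
  refine isOpen_iff_eventually.2 fun μ (hμ : c < (μ : Measure X) G) => ?_
  exact eventually_lt_of_lt_liminf (hμ.trans_le
    (ProbabilityMeasure.le_liminf_measure_open_of_tendsto tendsto_id hG))

theorem isOpen_setOf_measure_lt_of_isClosed {F : Set X} (hF : IsClosed F) (c : ℝ≥0∞) :
    IsOpen {μ : ProbabilityMeasure X | (μ : Measure X) F < c} := by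
  refine isOpen_iff_eventually.2 fun μ (hμ : (μ : Measure X) F < c) => ?_
  exact eventually_lt_of_limsup_lt
    ((ProbabilityMeasure.limsup_measure_closed_le_of_tendsto tendsto_id hF).trans_lt hμ)

end WeakTopology

section FiniteSupport

variable {X : Type*} [MetricSpace X] [SecondCountableTopology X] [MeasurableSpace X]
  [OpensMeasurableSpace X]

theorem exists_simpleFunc_tendsto_id [Nonempty X] :
    ∃ f : ℕ → SimpleFunc X X, ∀ x, Tendsto (fun n => f n x) atTop (𝓝 x) :=
  ⟨SimpleFunc.approxOn id measurable_id univ (Classical.arbitrary X) (mem_univ _), fun _ =>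
    SimpleFunc.tendsto_approxOn measurable_id (mem_univ _) (by simp)⟩

theorem dense_setOf_finite_support :
    Dense {μ : ProbabilityMeasure X | ∃ F : Finset X, ∀ᵐ x ∂(μ : Measure X), x ∈ F} := by
  intro μ
  have : Nonempty X := (μ : Measure X).nonempty_of_neZero
  obtain ⟨f, hf⟩ := exists_simpleFunc_tendsto_id (X := X)
  refine mem_closure_of_tendsto_of_measurePreserving (fun n => (f n).measurable)
    (MeasurePreserving.id _) hf fun n => ⟨(f n).range, ?_⟩
  have hrange : MeasurableSet ((f n).range : Set X) := by
    rw [SimpleFunc.coe_range]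
    exact (f n).finite_range.measurableSet
  rw [ProbabilityMeasure.toMeasure_map]
  exact (ae_map_iff (f n).measurable.aemeasurable hrange).2 (.of_forall (f n).mem_range_self)

end FiniteSupport

section Concentrated

/-- The probability measures with mass less than `ε` outside finitely many balls of a common radius
`r / 2 < δ / 2`, each heavier than a gauge `g r`. The radius is halved so that the ball of radius
`r` around any point of such a ball is heavy too. -/
def concentratedMeasures (X : Type*) [PseudoMetricSpace X] [MeasurableSpace X] (g : ℝ → ℝ≥0∞)
    (δ : ℝ) (ε : ℝ≥0∞) : Set (ProbabilityMeasure X) :=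
  {μ | ∃ r ∈ Ioo 0 δ, ∃ F : Finset X, (∀ x ∈ F, g r < (μ : Measure X) (ball x (r / 2))) ∧
    (μ : Measure X) (⋃ x ∈ F, ball x (r / 2))ᶜ < ε}

variable {X : Type*} [MeasurableSpace X] {g : ℝ → ℝ≥0∞} {δ : ℝ} {ε : ℝ≥0∞}

theorem isOpen_concentratedMeasures [PseudoMetricSpace X] [OpensMeasurableSpace X] :
    IsOpen (concentratedMeasures X g δ ε) := by
  refine isOpen_iff_eventually.2 fun μ ⟨r, hr, F, hheavy, hcompl⟩ => ?_
  have hheavy' := (eventually_all_finset F).2 fun x hx =>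
    (isOpen_setOf_lt_measure_of_isOpen (isOpen_ball (x := x) (ε := r / 2)) _).eventually_mem
      (hheavy x hx)
  have hcompl' := (isOpen_setOf_measure_lt_of_isClosed
    (isOpen_biUnion fun x (_ : x ∈ F) => isOpen_ball (x := x) (ε := r / 2)).isClosed_compl
      ε).eventually_mem hcompl
  filter_upwards [hheavy', hcompl'] with ν hν hν'
  exact ⟨r, hr, F, hν, hν'⟩

theorem mem_concentratedMeasures_of_ae_mem_finset [PseudoMetricSpace X]
    {μ : ProbabilityMeasure X} {F : Finset X} (hF : ∀ᵐ x ∂(μ : Measure X), x ∈ F)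
    (hg : Tendsto g (𝓝[>] 0) (𝓝 0)) (hδ : 0 < δ) (hε : 0 < ε) :
    μ ∈ concentratedMeasures X g δ ε := by
  classical
  let A := F.filter fun x => (μ : Measure X) {x} ≠ 0
  have hA : ∀ᵐ x ∂(μ : Measure X), x ∈ A := by
    have hnull : ∀ᵐ x ∂(μ : Measure X), ∀ y ∈ F, (μ : Measure X) {y} = 0 → x ≠ y :=
      (eventually_all_finset F).2 fun y _ => eventually_all.2 fun hy =>
        measure_eq_zero_iff_ae_notMem.1 hy
    filter_upwards [hF, hnull] with x hx hx'
    exact Finset.mem_filter.2 ⟨hx, fun h => hx' x hx h rfl⟩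
  have hatoms := (eventually_all_finset A).2 fun x hx =>
    hg.eventually_lt_const (pos_iff_ne_zero.2 (Finset.mem_filter.1 hx).2)
  obtain ⟨r, hrA, hr⟩ := (hatoms.and (Ioo_mem_nhdsGT hδ)).exists
  refine ⟨r, hr, A, fun x hx => (hrA x hx).trans_le (measure_mono ?_), ?_⟩
  · exact singleton_subset_iff.2 (mem_ball_self (half_pos hr.1))
  · refine lt_of_eq_of_lt (mem_ae_iff.1 ?_) hε
    filter_upwards [hA] with x hx using mem_biUnion hx (mem_ball_self (half_pos hr.1))

theorem measure_setOf_forall_measure_ball_le_le [PseudoMetricSpace X] {μ : ProbabilityMeasure X}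
    (hμ : μ ∈ concentratedMeasures X g δ ε) :
    (μ : Measure X) {x | ∀ r ∈ Ioo 0 δ, (μ : Measure X) (ball x r) ≤ g r} ≤ ε := by
  obtain ⟨r, hr, F, hheavy, hcompl⟩ := hμ
  refine (measure_mono fun x hx hxF => ?_).trans hcompl.le
  obtain ⟨y, hy, hxy⟩ := mem_iUnion₂.1 hxF
  refine (hx r hr).not_gt ((hheavy y hy).trans_le (measure_mono (ball_subset_ball' ?_)))
  rw [mem_ball, dist_comm] at hxy
  linarith

variable [MetricSpace X] [SecondCountableTopology X] [OpensMeasurableSpace X]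

theorem dense_concentratedMeasures (hg : Tendsto g (𝓝[>] 0) (𝓝 0)) (hδ : 0 < δ) (hε : 0 < ε) :
    Dense (concentratedMeasures X g δ ε) :=
  dense_setOf_finite_support.mono fun _ hμ =>
    mem_concentratedMeasures_of_ae_mem_finset hμ.choose_spec hg hδ hε

theorem eventually_residual_ae_frequently_lt_measure_ball (hg : Tendsto g (𝓝[>] 0) (𝓝 0)) :
    ∀ᶠ μ : ProbabilityMeasure X in residual _,
      ∀ᵐ x ∂(μ : Measure X), ∃ᶠ r in 𝓝[>] 0, g r < (μ : Measure X) (ball x r) := by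
  have hres : ∀ᶠ μ : ProbabilityMeasure X in residual _, ∀ m n : ℕ,
      μ ∈ concentratedMeasures X g (1 / ((m : ℝ) + 1)) (n : ℝ≥0∞)⁻¹ :=
    eventually_countable_forall.2 fun m => eventually_countable_forall.2 fun n =>
      residual_of_dense_open isOpen_concentratedMeasures (dense_concentratedMeasures hg
        Nat.one_div_pos_of_nat (ENNReal.inv_pos.2 (ENNReal.natCast_ne_top n)))
  filter_upwards [hres] with μ hμ
  have hnull (m : ℕ) : (μ : Measure X)
      {x | ∀ r ∈ Ioo 0 (1 / ((m : ℝ) + 1)), (μ : Measure X) (ball x r) ≤ g r} = 0 :=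
    le_antisymm (ge_of_tendsto' ENNReal.tendsto_inv_nat_nhds_zero fun n =>
      measure_setOf_forall_measure_ball_le_le (hμ m n)) bot_le
  filter_upwards [ae_all_iff.2 fun m => measure_eq_zero_iff_ae_notMem.1 (hnull m)] with x hx
  refine (nhdsGT_basis (0 : ℝ)).frequently_iff.2 fun δ hδ => ?_
  obtain ⟨m, hm⟩ := exists_nat_one_div_lt hδ
  obtain ⟨r, hr, hgr⟩ : ∃ r ∈ Ioo 0 (1 / ((m : ℝ) + 1)), g r < (μ : Measure X) (ball x r) := by
    simpa [and_assoc] using hx m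
  exact ⟨r, ⟨hr.1, hr.2.trans hm⟩, hgr⟩

theorem eventually_residual_ae_lowerLocalDim_eq_zero :
    ∀ᶠ μ : ProbabilityMeasure X in residual _,
      ∀ᵐ x ∂(μ : Measure X), lowerLocalDim (μ : Measure X) x = 0 := by
  have hgauge {s : ℝ} (hs : 0 < s) :
      Tendsto (fun r : ℝ => ENNReal.ofReal r ^ s) (𝓝[>] 0) (𝓝 0) := by
    have h : Continuous fun r : ℝ => ENNReal.ofReal r ^ s :=
      ENNReal.continuous_rpow_const.comp ENNReal.continuous_ofReal
    simpa [hs] using (h.tendsto 0).mono_left nhdsWithin_le_nhds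
  filter_upwards [eventually_countable_forall.2 fun n : ℕ =>
    eventually_residual_ae_frequently_lt_measure_ball (X := X)
      (hgauge (Nat.one_div_pos_of_nat (n := n)))] with μ hμ
  filter_upwards [ae_all_iff.2 hμ] with x hx
  refine le_antisymm (lowerLocalDim_le_iff.2 fun t ht => ?_) (lowerLocalDim_nonneg _ x)
  obtain ⟨n, hn⟩ := exists_nat_one_div_lt (EReal.coe_pos.1 ht)
  refine ((hx n).and_eventually (Ioo_mem_nhdsGT one_pos)).mono fun r ⟨hr, hr1⟩ => ?_
  exact (ENNReal.rpow_le_rpow_of_exponent_ge (ENNReal.ofReal_le_one.2 hr1.2.le) hn.le).trans_lt hr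

end Concentrated

section Diffuse

/-- The probability measures for which the space has a finite closed cover by sets of mass less than
`ε`; those lying in all of these sets are the atomless ones. -/
def diffuseMeasures (X : Type*) [TopologicalSpace X] [MeasurableSpace X] (ε : ℝ≥0∞) :
    Set (ProbabilityMeasure X) :=
  {μ | ∃ C : Set (Set X), C.Finite ∧ (∀ K ∈ C, IsClosed K ∧ (μ : Measure X) K < ε) ∧ ⋃₀ C = univ}

theorem nullSingletonClass_of_forall_mem_diffuseMeasures {X ι : Type*} [TopologicalSpace X]
    [MeasurableSpace X] {μ : ProbabilityMeasure X} {l : Filter ι} [l.NeBot] {ε : ι → ℝ≥0∞}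
    (hε : Tendsto ε l (𝓝 0)) (h : ∀ i, μ ∈ diffuseMeasures X (ε i)) :
    NullSingletonClass (μ : Measure X) := by
  refine ⟨fun x => le_antisymm (ge_of_tendsto' hε fun i => ?_) bot_le⟩
  obtain ⟨C, -, hC, hU⟩ := h i
  obtain ⟨K, hK, hxK⟩ := mem_sUnion.1 (hU ▸ mem_univ x)
  exact (measure_mono (singleton_subset_iff.2 hxK)).trans (hC K hK).2.le

theorem isOpen_diffuseMeasures {X : Type*} [TopologicalSpace X] [HasOuterApproxClosed X]
    [MeasurableSpace X] [OpensMeasurableSpace X] {ε : ℝ≥0∞} : IsOpen (diffuseMeasures X ε) := by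
  refine isOpen_iff_eventually.2 fun μ ⟨C, hC, hsmall, hU⟩ => ?_
  have hsmall' := (eventually_all_finite hC).2 fun K hK =>
    (isOpen_setOf_measure_lt_of_isClosed (hsmall K hK).1 ε).eventually_mem (hsmall K hK).2
  filter_upwards [hsmall'] with ν hν
  exact ⟨C, hC, fun K hK => ⟨(hsmall K hK).1, hν K hK⟩, hU⟩

variable {X : Type*} [MetricSpace X] [MeasurableSpace X] [OpensMeasurableSpace X]

theorem exists_measure_closedBall_lt (μ : Measure X) [IsFiniteMeasure μ] [NullSingletonClass μ]
    {ε : ℝ≥0∞} (hε : 0 < ε) (x : X) : ∃ r > 0, μ (closedBall x r) < ε := by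
  have h := tendsto_measure_cthickening_of_isClosed (μ := μ) (s := {x})
    ⟨1, one_pos, measure_ne_top _ _⟩ isClosed_singleton
  rw [measure_singleton] at h
  obtain ⟨r, hr, hr0⟩ := (((h.mono_left nhdsWithin_le_nhds).eventually_lt_const hε).and
    (self_mem_nhdsWithin (s := Ioi (0 : ℝ)))).exists
  exact ⟨r, hr0, by rwa [cthickening_singleton _ (le_of_lt hr0)] at hr⟩

variable [SecondCountableTopology X]

theorem mem_diffuseMeasures_of_nullSingletonClass {μ : ProbabilityMeasure X} {ε : ℝ≥0∞}
    (hε : 0 < ε) [NullSingletonClass (μ : Measure X)] :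
    μ ∈ diffuseMeasures X ε := by
  classical
  choose r hr hsmall using exists_measure_closedBall_lt (μ : Measure X) hε
  obtain ⟨s, hs, hcov⟩ := TopologicalSpace.countable_cover_nhds fun x => ball_mem_nhds x (hr x)
  have := hs.to_subtype
  let U (t : Finset s) : Set X := ⋃ x ∈ t, ball x.1 (r x)
  have hUopen (t : Finset s) : IsOpen (U t) := isOpen_biUnion fun _ _ => isOpen_ball
  have hU : ⋃ t, U t = univ := by
    rw [← iUnion_eq_iUnion_finset, ← biUnion_eq_iUnion s fun x _ => ball x (r x), hcov]
  have hUmono : Monotone U := fun t t' h => biUnion_subset_biUnion_left h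
  have hlim := tendsto_measure_iInter_atTop (μ := (μ : Measure X))
    (fun t => (hUopen t).isClosed_compl.measurableSet.nullMeasurableSet)
    (fun _ _ h => compl_subset_compl.2 (hUmono h)) ⟨∅, measure_ne_top _ _⟩
  rw [← compl_iUnion, hU, compl_univ, measure_empty] at hlim
  obtain ⟨t, ht⟩ := (hlim.eventually_lt_const hε).exists
  refine ⟨insert (U t)ᶜ ((fun x : s => closedBall x.1 (r x)) '' t),
    (t.finite_toSet.image _).insert _, ?_, ?_⟩
  · rintro _ (rfl | ⟨x, -, rfl⟩)
    · exact ⟨(hUopen t).isClosed_compl, ht⟩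
    · exact ⟨isClosed_closedBall, hsmall x⟩
  · rw [sUnion_insert, sUnion_image]
    refine univ_subset_iff.1 ((compl_union_self (U t)).ge.trans (union_subset_union_right _ ?_))
    exact biUnion_mono subset_rfl fun x _ => ball_subset_closedBall

theorem eventually_residual_nullSingletonClass
    (h : Dense {μ : ProbabilityMeasure X | NullSingletonClass (μ : Measure X)}) :
    ∀ᶠ μ : ProbabilityMeasure X in residual _, NullSingletonClass (μ : Measure X) := by
  have hres : ∀ᶠ μ : ProbabilityMeasure X in residual _, ∀ n : ℕ,
      μ ∈ diffuseMeasures X (n : ℝ≥0∞)⁻¹ :=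
    eventually_countable_forall.2 fun n => residual_of_dense_open isOpen_diffuseMeasures <|
      h.mono fun μ (hμ : NullSingletonClass (μ : Measure X)) =>
        mem_diffuseMeasures_of_nullSingletonClass (ENNReal.inv_pos.2 (ENNReal.natCast_ne_top n))
  filter_upwards [hres] with μ hμ
  exact nullSingletonClass_of_forall_mem_diffuseMeasures ENNReal.tendsto_inv_nat_nhds_zero hμ

end Diffuse

section Perfect

variable {X Ω : Type*} [MeasurableSpace Ω]

theorem nullSingletonClass_map_prod [MeasurableSpace X] [MeasurableSingletonClass X]
    {Y : Type*} [MeasurableSpace Y] (μ : Measure Y) (ν : Measure Ω) [SFinite ν]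
    [NullSingletonClass ν] {f : Y × Ω → X} (hf : Measurable f)
    (hinj : ∀ y, Function.Injective fun ω => f (y, ω)) :
    NullSingletonClass ((μ.prod ν).map f) := by
  refine ⟨fun x => ?_⟩
  rw [Measure.map_apply hf (measurableSet_singleton x),
    Measure.prod_apply (hf (measurableSet_singleton x))]
  refine (lintegral_congr fun y => ?_).trans lintegral_zero
  exact (subsingleton_singleton.preimage (hinj y)).measure_zero _

variable [MetricSpace X] [CompleteSpace X] [PerfectSpace X] [MeasurableSpace X] [BorelSpace X]

theorem exists_measurable_injective_mem_closure [MeasurableSpace.CountablySeparated Ω] {U : Set X}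
    (hU : IsOpen U) (hne : U.Nonempty) :
    ∃ f : Ω → X, Measurable f ∧ Function.Injective f ∧ ∀ ω, f ω ∈ closure U := by
  obtain ⟨e, he, he_cont, he_inj⟩ := (hU.perfect_closure).exists_nat_bool_injection hne.closure
  obtain ⟨g, hg, hg_inj⟩ :=
    MeasurableSpace.measurable_injection_nat_bool_of_countablySeparated Ω
  exact ⟨e ∘ g, he_cont.measurable.comp hg, he_inj.comp hg_inj, fun ω => he (mem_range_self _)⟩

theorem dense_setOf_nullSingletonClass [SecondCountableTopology X] :
    Dense {μ : ProbabilityMeasure X | NullSingletonClass (μ : Measure X)} := by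
  intro μ
  have : Nonempty X := (μ : Measure X).nonempty_of_neZero
  obtain ⟨f, hf⟩ := exists_simpleFunc_tendsto_id (X := X)
  choose T hTmeas hTinj hT using fun (n : ℕ) (x : X) =>
    exists_measurable_injective_mem_closure (Ω := unitInterval)
      (isOpen_ball (x := x) (ε := 1 / ((n : ℝ) + 1))) ⟨x, mem_ball_self Nat.one_div_pos_of_nat⟩
  let P : ProbabilityMeasure (X × unitInterval) := ⟨(μ : Measure X).prod volume, inferInstance⟩
  let Y (n : ℕ) (p : X × unitInterval) : X := T n (f n p.1) p.2
  have hY (n : ℕ) : Measurable (Y n) :=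
    ((f n).comp Prod.fst measurable_fst).measurable_bind (fun x p => T n x p.2)
      fun x => (hTmeas n x).comp measurable_snd
  have hdist (p : X × unitInterval) (n : ℕ) : dist (Y n p) (f n p.1) ≤ 1 / ((n : ℝ) + 1) :=
    closure_ball_subset_closedBall (hT n (f n p.1) p.2)
  refine mem_closure_of_tendsto_of_measurePreserving (P := P) hY measurePreserving_fst
    (fun p => ?_) fun n => ?_
  · exact (hf p.1).congr_dist (squeeze_zero (fun _ => dist_nonneg)
      (fun n => (dist_comm _ _).trans_le (hdist p n)) tendsto_one_div_add_atTop_nhds_zero_nat)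
  · exact nullSingletonClass_map_prod (μ : Measure X) volume (hY n) fun x => hTinj n (f n x)

end Perfect

section TypicalMeasures

theorem typical_measures_levelSet_zero_general {X : Type*} [MetricSpace X] [CompleteSpace X]
    [SecondCountableTopology X] [PerfectSpace X] [MeasurableSpace X] [BorelSpace X] :
    ∀ᶠ μ : ProbabilityMeasure X in residual _,
      ¬ {x | lowerLocalDim (μ : Measure X) x = 0}.Countable ∧
        dimH {x | lowerLocalDim (μ : Measure X) x = 0} = 0 := by
  filter_upwards [eventually_residual_ae_lowerLocalDim_eq_zero,
    eventually_residual_nullSingletonClass (X := X) dense_setOf_nullSingletonClass]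
    with μ hdim hatomless
  refine ⟨fun hcount => ?_, le_antisymm ?_ bot_le⟩
  · obtain ⟨x, hx, hx'⟩ := (hdim.and (hcount.ae_notMem (μ : Measure X))).exists
    exact hx' hx
  · exact (dimH_mono fun x hx => by simpa using hx.le).trans
      (dimH_setOf_lowerLocalDim_le (μ : Measure X) 0)

theorem perfectSpace_cube {d : ℕ} (hd : 1 ≤ d) : PerfectSpace (Cube d) := by
  have : ConnectedSpace (Cube d) := isConnected_iff_connectedSpace.1
    ⟨nonempty_Icc.2 zero_le_one, (convex_Icc _ _).isPreconnected⟩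
  have : Nonempty (Fin d) := ⟨⟨0, hd⟩⟩
  have : Nontrivial (Cube d) :=
    ⟨⟨0, left_mem_Icc.2 zero_le_one⟩, ⟨1, right_mem_Icc.2 zero_le_one⟩,
      fun h => zero_ne_one (congrArg Subtype.val h)⟩
  infer_instance

end TypicalMeasures

/-- There is a dense `Gδ` set `R` of probability measures on `[0,1]^d`
(with the weak topology) such that for every `μ ∈ R`, the level set `E_μ(0)` is uncountable
and has Hausdorff dimension `0`. -/
theorem typical_measures_levelSet_zero (d : ℕ) (hd : 1 ≤ d) :
    ∃ R : Set (ProbabilityMeasure (Cube d)), IsGδ R ∧ Dense R ∧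
      ∀ μ ∈ R, ¬ (levelSet (μ : Measure (Cube d)) 0).Countable ∧
        dimH (levelSet (μ : Measure (Cube d)) 0) = 0 := by
  have := perfectSpace_cube hd
  exact eventually_residual.1 typical_measures_levelSet_zero_general
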